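/- Weighted Ehrhart reciprocity (polynomiality part): if P \subseteq \mathbb{R}^m is a lattice polytope and f: \mathbb{R}^m \to \mathbb{R} is a polynomial function of degree p, then the function L_{P,f}(n) = \sum_{z \in nP \cap \mathbb{Z}^m} f(z) agrees with a polynomial in n of degree at most \dim P + p, for all positive integers n. -/

import Mathlib

open scoped Pointwise

lemma ehr_faulhaber (b : ℕ) : ∃ R : Polynomial ℝ, R.natDegree ≤ b + 1 ∧
    ∀ N : ℕ, R.eval (N : ℝ) = ∑ j ∈ Finset.range N, (j : ℝ) ^ b := by
  refine ⟨∑ i ∈ Finset.range (b + 1),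
    Polynomial.C ((bernoulli i : ℝ) * ((b + 1).choose i : ℝ) / ((b : ℝ) + 1)) *
      Polynomial.X ^ (b + 1 - i), ?_, ?_⟩
  · refine Polynomial.natDegree_sum_le_of_forall_le _ _ fun i _ => ?_
    exact (Polynomial.natDegree_C_mul_X_pow_le _ _).trans (by omega)
  · intro N
    have h := sum_range_pow N b
    have h2 := congrArg (fun x : ℚ => (x : ℝ)) h
    push_cast at h2
    rw [h2, Polynomial.eval_finsetSum]
    refine Finset.sum_congr rfl fun i _ => ?_
    simp
    ring

lemma ehr_conv_monomial (a : ℕ) : ∀ b : ℕ, ∃ R : Polynomial ℝ, R.natDegree ≤ a + b + 1 ∧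
    ∀ N : ℕ, R.eval (N : ℝ) =
      ∑ j ∈ Finset.range N, ((N : ℝ) - 1 - j) ^ a * (j : ℝ) ^ b := by
  induction a with
  | zero =>
    intro b
    obtain ⟨R, h1, h2⟩ := ehr_faulhaber b
    exact ⟨R, by omega, fun N => by simp [h2]⟩
  | succ a ih =>
    intro b
    obtain ⟨R, h1, h2⟩ := ih b
    obtain ⟨R', h1', h2'⟩ := ih (b + 1)
    refine ⟨(Polynomial.X - Polynomial.C 1) * R - R', ?_, ?_⟩
    · refine (Polynomial.natDegree_sub_le _ _).trans (max_le ?_ (by omega))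
      refine Polynomial.natDegree_mul_le.trans ?_
      rw [Polynomial.natDegree_X_sub_C]
      omega
    · intro N
      simp only [Polynomial.eval_sub, Polynomial.eval_mul, h2, h2', Polynomial.eval_X,
        Polynomial.eval_C, Finset.mul_sum, ← Finset.sum_sub_distrib]
      refine Finset.sum_congr rfl fun j _ => ?_
      ring

lemma ehr_conv (P : Polynomial ℝ) (b : ℕ) : ∃ R : Polynomial ℝ,
    R.natDegree ≤ P.natDegree + b + 1 ∧
    ∀ N : ℕ, R.eval (N : ℝ) =
      ∑ j ∈ Finset.range N, P.eval ((N : ℝ) - 1 - j) * (j : ℝ) ^ b := by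
  choose R h1 h2 using fun a => ehr_conv_monomial a b
  refine ⟨∑ a ∈ Finset.range (P.natDegree + 1), Polynomial.C (P.coeff a) * R a, ?_, ?_⟩
  · refine Polynomial.natDegree_sum_le_of_forall_le _ _ fun a ha => ?_
    refine (Polynomial.natDegree_C_mul_le _ _).trans ((h1 a).trans ?_)
    have := Finset.mem_range.1 ha
    omega
  · intro N
    simp only [Polynomial.eval_finsetSum, Polynomial.eval_mul, Polynomial.eval_C, h2,
      Polynomial.eval_eq_sum_range (p := P), Finset.mul_sum, Finset.sum_mul]
    rw [Finset.sum_comm]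
    refine Finset.sum_congr rfl fun j _ => Finset.sum_congr rfl fun i _ => ?_
    ring

lemma ehr_simplex_monomial {ι : Type*} [DecidableEq ι] (e : ι → ℕ) (σ : Finset ι)
    (hσ : σ.Nonempty) : ∀ r : ℕ, σ.card = r + 1 → ∃ q : Polynomial ℝ,
      q.natDegree ≤ r + ∑ i ∈ σ, e i ∧
      (∀ N : ℕ, N < r → q.eval (N : ℝ) = 0) ∧
      ∀ M : ℕ, q.eval ((M + r : ℕ) : ℝ) =
        ∑ c ∈ σ.piAntidiag M, ∏ i ∈ σ, (c i : ℝ) ^ e i := by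
  induction hσ using Finset.Nonempty.cons_induction with
  | singleton a =>
    intro r hr
    have hr0 : r = 0 := by simpa using hr.symm
    subst hr0
    refine ⟨Polynomial.X ^ e a, by simp, by simp, fun M => ?_⟩
    have : Finset.piAntidiag {a} M = {Pi.single a M} := by
      ext c
      simp only [Finset.mem_piAntidiag, Finset.sum_singleton, Finset.mem_singleton]
      constructor
      · rintro ⟨h1, h2⟩
        ext i
        by_cases hi : i = a
        · subst hi; simp [h1]
        · simp only [Pi.single_apply, hi, if_false]
          by_contra h
          exact hi (h2 i h)
      · rintro rfl
        refine ⟨by simp, fun i hi => ?_⟩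
        by_contra h
        simp [h] at hi
    simp [this]
  | cons i σ hi hne ih =>
    intro r hr
    rw [Finset.card_cons] at hr
    obtain ⟨r, rfl⟩ : ∃ r', r = r' + 1 := ⟨r - 1, by have := hne.card_pos; omega⟩
    obtain ⟨q, hq1, hq2, hq3⟩ := ih r (by omega)
    obtain ⟨R, hR1, hR2⟩ := ehr_conv q (e i)
    have key : ∀ N j : ℕ, j < N → ((N : ℝ) - 1 - j) = ((N - 1 - j : ℕ) : ℝ) := by
      intro N j h
      rw [Nat.cast_sub (by omega), Nat.cast_sub (by omega)]; simp
    refine ⟨R, ?_, ?_, ?_⟩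
    · rw [Finset.sum_cons]; omega
    · intro N hN
      rw [hR2]
      refine Finset.sum_eq_zero fun j hj => ?_
      have := Finset.mem_range.1 hj
      rw [key N j this, hq2 _ (by omega), zero_mul]
    · intro M
      rw [hR2, Finset.piAntidiag_cons, Finset.sum_disjiUnion,
        Finset.Nat.sum_antidiagonal_eq_sum_range_succ_mk]
      have hsub : Finset.range M.succ ⊆ Finset.range (M + (r + 1)) := by
        intro x; simp only [Finset.mem_range]; omega
      rw [← Finset.sum_subset hsub]
      · refine Finset.sum_congr rfl fun j hj => ?_
        have hj := Finset.mem_range.1 hj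
        rw [key _ j (by omega), show M + (r + 1) - 1 - j = (M - j) + r by omega, hq3,
          Finset.sum_map, Finset.sum_mul]
        refine Finset.sum_congr rfl fun c hc => ?_
        rw [Finset.prod_cons]
        have hci : c i = 0 := by
          by_contra h
          exact hi ((Finset.mem_piAntidiag.1 hc).2 i h)
        simp only [addRightEmbedding_apply, Pi.add_apply, hci, if_true, zero_add]
        rw [mul_comm]
        congr 1
        refine Finset.prod_congr rfl fun k hk => ?_
        have : k ≠ i := fun h => hi (h ▸ hk)
        simp [this]
      · intro j hj hj'
        have hj := Finset.mem_range.1 hj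
        have hj' : ¬ j < M.succ := fun h => hj' (Finset.mem_range.2 h)
        rw [key _ j (by omega), hq2 _ (by omega), zero_mul]

lemma ehr_simplex_poly {ι : Type*} [DecidableEq ι] [Fintype ι] (G : MvPolynomial ι ℝ) (p : ℕ)
    (hG : G.totalDegree ≤ p) (σ : Finset ι)
    (hσ : σ.Nonempty) (r : ℕ) (hr : σ.card = r + 1) : ∃ q : Polynomial ℝ,
      q.natDegree ≤ r + p ∧
      (∀ N : ℕ, N < r → q.eval (N : ℝ) = 0) ∧
      ∀ M : ℕ, q.eval ((M + r : ℕ) : ℝ) =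
        ∑ c ∈ σ.piAntidiag M, MvPolynomial.eval (fun i => (c i : ℝ)) G := by
  choose q h1 h2 h3 using fun e : ι →₀ ℕ => ehr_simplex_monomial (e : ι → ℕ) σ hσ r hr
  refine ⟨∑ e ∈ G.support, Polynomial.C (G.coeff e * ∏ i ∈ σᶜ, (0 : ℝ) ^ e i) * q e, ?_, ?_, ?_⟩
  · refine Polynomial.natDegree_sum_le_of_forall_le _ _ fun e he => ?_
    refine (Polynomial.natDegree_C_mul_le _ _).trans ((h1 e).trans ?_)
    have h := (MvPolynomial.le_totalDegree he).trans hG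
    have h' : ∑ i ∈ σ, e i ≤ ∑ i, e i := Finset.sum_le_univ_sum_of_nonneg (by simp)
    rw [Finsupp.sum_fintype _ _ (by simp)] at h
    omega
  · intro N hN
    simp [Polynomial.eval_finsetSum, h2 _ N hN]
  · intro M
    simp only [Polynomial.eval_finsetSum, Polynomial.eval_mul, Polynomial.eval_C, h3,
      MvPolynomial.eval_eq', Finset.mul_sum]
    rw [Finset.sum_comm]
    refine Finset.sum_congr rfl fun c hc => Finset.sum_congr rfl fun e _ => ?_
    rw [← Finset.prod_mul_prod_compl σ, mul_assoc, mul_comm (∏ i ∈ σᶜ, _)]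
    congr 2
    refine Finset.prod_congr rfl fun i hi => ?_
    have : c i = 0 := by
      by_contra h
      exact (Finset.mem_compl.1 hi) ((Finset.mem_piAntidiag.1 hc).2 i h)
    simp [this]

lemma ehr_totalDegree_subst {κ ι : Type*} (f : MvPolynomial κ ℝ) (g : κ → MvPolynomial ι ℝ)
    (hg : ∀ j, (g j).totalDegree ≤ 1) : (MvPolynomial.bind₁ g f).totalDegree ≤ f.totalDegree := by
  rw [MvPolynomial.bind₁, MvPolynomial.aeval_def, MvPolynomial.eval₂_eq]
  refine MvPolynomial.totalDegree_finsetSum_le fun d hd => ?_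
  refine (MvPolynomial.totalDegree_mul _ _).trans ?_
  rw [MvPolynomial.algebraMap_eq, MvPolynomial.totalDegree_C, zero_add]
  refine (MvPolynomial.totalDegree_finsetProd _ _).trans ?_
  refine le_trans ?_ (MvPolynomial.le_totalDegree hd)
  refine Finset.sum_le_sum fun i _ => ?_
  refine (MvPolynomial.totalDegree_pow _ _).trans ?_
  have := Nat.mul_le_mul_left (d i) (hg i)
  simpa using this

/-- lexicographically minimal nonnegative representation -/
def EhrCan {k : ℕ} {V : Type*} [AddCommGroup V] [Module ℝ V]
    (A : (Fin k → ℝ) →ₗ[ℝ] V) (a : Fin k → ℝ) : Prop :=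
  (∀ i, 0 ≤ a i) ∧ ∀ b : Fin k → ℝ, (∀ i, 0 ≤ b i) → A b = A a →
    ∀ i, (∀ j < i, b j = a j) → a i ≤ b i

lemma ehr_lexmin {k : ℕ} (K : Set (Fin k → ℝ)) (hK : IsCompact K) (hne : K.Nonempty) (d : ℕ) :
    ∃ a ∈ K, ∀ b ∈ K, ∀ i : Fin k, (i : ℕ) < d → (∀ j < i, b j = a j) → a i ≤ b i := by
  induction d with
  | zero =>
    obtain ⟨a, ha⟩ := hne
    exact ⟨a, ha, fun b _ i hi => absurd hi (by omega)⟩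
  | succ d ih =>
    obtain ⟨a, ha, hmin⟩ := ih
    by_cases hd : d < k
    · let K' : Set (Fin k → ℝ) := K ∩ {b | ∀ j : Fin k, (j : ℕ) < d → b j = a j}
      have hcl : IsClosed {b : Fin k → ℝ | ∀ j : Fin k, (j : ℕ) < d → b j = a j} := by
        simp only [Set.ofPred_forall]
        exact isClosed_iInter fun j => isClosed_iInter fun _ =>
          isClosed_eq (continuous_apply j) continuous_const
      have hK' : IsCompact K' := hK.inter_right hcl
      obtain ⟨a', ha', hmin'⟩ := hK'.exists_isMinOn ⟨a, ha, fun _ _ => rfl⟩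
        (continuous_apply (⟨d, hd⟩ : Fin k)).continuousOn
      refine ⟨a', ha'.1, fun b hb i hi hj => ?_⟩
      by_cases hid : (i : ℕ) < d
      · have h1 := hmin b hb i hid fun j hji => by
          rw [hj j hji, ha'.2 j (lt_trans (Fin.lt_def.1 hji) hid)]
        rwa [ha'.2 i hid]
      · have : i = ⟨d, hd⟩ := Fin.ext (by simp; omega)
        subst this
        refine hmin' (show b ∈ K' from ⟨hb, fun j hjd => ?_⟩)
        rw [hj j (Fin.lt_def.2 hjd), ha'.2 j hjd]
    · exact ⟨a, ha, fun b hb i _ => hmin b hb i (by omega)⟩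

section
variable {k : ℕ} {V : Type*} [AddCommGroup V] [Module ℝ V] (A : (Fin k → ℝ) →ₗ[ℝ] V)

lemma EhrCan.unique {a b : Fin k → ℝ} (ha : EhrCan A a) (hb : EhrCan A b) (h : A a = A b) :
    a = b := by
  have : ∀ d : ℕ, ∀ i : Fin k, (i : ℕ) = d → a i = b i := by
    intro d
    induction d using Nat.strong_induction_on with
    | _ d ih =>
      intro i hi
      have hlt : ∀ j < i, a j = b j := fun j hj => ih j (by rw [← hi]; exact hj) j rfl
      exact le_antisymm (ha.2 b hb.1 h.symm i fun j hj => (hlt j hj).symm) (hb.2 a ha.1 h i hlt)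
  funext i
  exact this i i rfl

lemma EhrCan.of_support {a a' : Fin k → ℝ} (ha : EhrCan A a) (h0 : ∀ i, 0 ≤ a' i)
    (hs : ∀ i, a i = 0 → a' i = 0) : EhrCan A a' := by
  refine ⟨h0, fun b hb hA i hi => ?_⟩
  obtain ⟨ε, hε, hle⟩ : ∃ ε : ℝ, 0 < ε ∧ ∀ j, ε * a' j ≤ a j := by
    have hev : ∀ᶠ ε in nhdsWithin (0 : ℝ) (Set.Ioi 0), ∀ j, ε * a' j ≤ a j := by
      rw [Filter.eventually_all]
      intro j
      by_cases hj : a j = 0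
      · simp [hj, hs j hj]
      · have hpos : 0 < a j := lt_of_le_of_ne (ha.1 j) (Ne.symm hj)
        have ht : Filter.Tendsto (fun ε : ℝ => ε * a' j) (nhdsWithin 0 (Set.Ioi 0)) (nhds 0) := by
          have : Continuous fun ε : ℝ => ε * a' j := by fun_prop
          have h := this.tendsto 0
          rw [zero_mul] at h
          exact h.mono_left nhdsWithin_le_nhds
        exact (ht.eventually (gt_mem_nhds hpos)).mono fun _ h => h.le
    obtain ⟨ε, h1, h2⟩ := (hev.and self_mem_nhdsWithin).exists
    exact ⟨ε, h2, h1⟩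
  have h1 := ha.2 (a + ε • (b - a')) (fun j => ?_) ?_ i fun j hj => ?_
  · simp only [Pi.add_apply, Pi.smul_apply, Pi.sub_apply, smul_eq_mul] at h1
    by_contra hlt
    have := mul_neg_of_pos_of_neg hε (show b i - a' i < 0 by linarith)
    linarith
  · simp only [Pi.add_apply, Pi.smul_apply, Pi.sub_apply, smul_eq_mul]
    have := mul_nonneg hε.le (hb j)
    have := hle j
    linarith
  · simp [hA]
  · simp [hi j hj]

lemma EhrCan.inj {a : Fin k → ℝ} (ha : EhrCan A a) {x y : Fin k → ℝ}
    (hx : ∀ i, a i = 0 → x i = 0) (hy : ∀ i, a i = 0 → y i = 0) (h : A x = A y) : x = y := by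
  have h1 : EhrCan A (fun i => max (x i - y i) 0) :=
    ha.of_support A (fun i => le_max_right _ _) fun i hi => by simp [hx i hi, hy i hi]
  have h2 : EhrCan A (fun i => max (y i - x i) 0) :=
    ha.of_support A (fun i => le_max_right _ _) fun i hi => by simp [hx i hi, hy i hi]
  have h3 : (fun i => max (x i - y i) 0) = fun i => max (y i - x i) 0 := by
    refine h1.unique A h2 ?_
    rw [← sub_eq_zero, ← map_sub]
    have : ((fun i => max (x i - y i) 0) - fun i => max (y i - x i) 0) = x - y := by
      funext i
      simp only [Pi.sub_apply]
      rcases le_total (x i) (y i) with h | h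
      · rw [max_eq_right (by linarith), max_eq_left (by linarith)]; ring
      · rw [max_eq_left (by linarith), max_eq_right (by linarith)]; ring
    rw [this, map_sub, h, sub_self]
  funext i
  have h4 := congrFun h3 i
  rcases le_total (x i) (y i) with h | h
  · rw [max_eq_right (by linarith), max_eq_left (by linarith)] at h4; linarith
  · rw [max_eq_left (by linarith), max_eq_right (by linarith)] at h4; linarith

end

/-- homogenised combination map -/
noncomputable def ehrA {k m : ℕ} (v : Fin k → Fin m → ℤ) :
    (Fin k → ℝ) →ₗ[ℝ] (Fin m → ℝ) × ℝ :=
  Fintype.linearCombination ℝ (fun i => ((fun j => (v i j : ℝ)), (1 : ℝ)))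

lemma ehrA_apply {k m : ℕ} (v : Fin k → Fin m → ℤ) (a : Fin k → ℝ) :
    ehrA v a = ((fun j => ∑ i, a i * (v i j : ℝ)), ∑ i, a i) := by
  rw [ehrA, Fintype.linearCombination_apply]
  ext j
  · simp [Prod.fst_sum]
  · simp [Prod.snd_sum]

lemma ehrCan_exists {k m : ℕ} (v : Fin k → Fin m → ℤ) (a : Fin k → ℝ) (ha : ∀ i, 0 ≤ a i) :
    ∃ b, EhrCan (ehrA v) b ∧ ehrA v b = ehrA v a := by
  let K : Set (Fin k → ℝ) := {b | (∀ i, 0 ≤ b i) ∧ ehrA v b = ehrA v a}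
  have hcl : IsClosed K := by
    have h1 : IsClosed {b : Fin k → ℝ | ∀ i, 0 ≤ b i} := by
      simp only [Set.ofPred_forall]
      exact isClosed_iInter fun j => isClosed_le continuous_const (continuous_apply j)
    exact h1.inter (isClosed_eq (ehrA v).continuous_of_finiteDimensional continuous_const)
  have hsub : K ⊆ Set.Icc 0 (fun _ => ∑ i, a i) := by
    rintro b ⟨hb, hb'⟩
    refine ⟨hb, fun i => ?_⟩
    rw [ehrA_apply, ehrA_apply, Prod.mk.injEq] at hb'
    rw [← hb'.2]
    exact Finset.single_le_sum (fun j _ => hb j) (Finset.mem_univ i)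
  have hK : IsCompact K := isCompact_Icc.of_isClosed_subset hcl hsub
  obtain ⟨b, hb, hmin⟩ := ehr_lexmin K hK ⟨a, ha, rfl⟩ k
  exact ⟨b, ⟨hb.1, fun c hc hA i hi => hmin c ⟨hc, hA.trans hb.2⟩ i i.2 hi⟩, hb.2⟩

/-- lattice points of the dilated relatively open simplex -/
def ehrO {k m : ℕ} (v : Fin k → Fin m → ℤ) (σ : Finset (Fin k)) (n : ℕ) : Set (Fin m → ℤ) :=
  {z | ∃ a : Fin k → ℝ, (∀ i ∈ σ, 0 < a i) ∧ (∀ i ∉ σ, a i = 0) ∧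
    ehrA v a = ((fun j => (z j : ℝ)), (n : ℝ))}

/-- half-open box points -/
def ehrB {k m : ℕ} (v : Fin k → Fin m → ℤ) (σ : Finset (Fin k)) : Set ((Fin m → ℤ) × ℕ) :=
  {w | ∃ t : Fin k → ℝ, (∀ i ∈ σ, 0 < t i ∧ t i ≤ 1) ∧ (∀ i ∉ σ, t i = 0) ∧
    ehrA v t = ((fun j => (w.1 j : ℝ)), (w.2 : ℝ))}

lemma ehrB_le {k m : ℕ} (v : Fin k → Fin m → ℤ) (σ : Finset (Fin k)) {w} (hw : w ∈ ehrB v σ) :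
    w.2 ≤ σ.card := by
  obtain ⟨t, h1, h2, h3⟩ := hw
  rw [ehrA_apply, Prod.mk.injEq] at h3
  have : (w.2 : ℝ) ≤ σ.card := by
    rw [← h3.2, ← Finset.sum_subset (Finset.subset_univ σ) fun i _ hi => h2 i hi]
    simpa using Finset.sum_le_card_nsmul σ t 1 fun i hi => (h1 i hi).2
  exact_mod_cast this

lemma ehrB_finite {k m : ℕ} (v : Fin k → Fin m → ℤ) (σ : Finset (Fin k)) :
    (ehrB v σ).Finite := by
  refine ((Set.finite_Icc (fun j => -∑ i, |v i j|) (fun j => ∑ i, |v i j|)).prod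
    (Set.finite_Iic σ.card)).subset ?_
  intro w hw
  refine ⟨?_, ehrB_le v σ hw⟩
  obtain ⟨t, h1, h2, h3⟩ := hw
  rw [ehrA_apply, Prod.mk.injEq] at h3
  have hb : ∀ j, |w.1 j| ≤ ∑ i, |v i j| := by
    intro j
    have h4 := congrFun h3.1 j
    have : |(w.1 j : ℝ)| ≤ ∑ i, |(v i j : ℝ)| := by
      rw [← h4]
      refine (Finset.abs_sum_le_sum_abs _ _).trans (Finset.sum_le_sum fun i _ => ?_)
      rw [abs_mul]
      refine mul_le_of_le_one_left (abs_nonneg _) ?_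
      by_cases hi : i ∈ σ
      · rw [abs_of_pos (h1 i hi).1]; exact (h1 i hi).2
      · simp [h2 i hi]
    exact_mod_cast this
  exact ⟨fun j => (abs_le.1 (hb j)).1, fun j => (abs_le.1 (hb j)).2⟩

/-- translate of a box point -/
def ehrT {k m : ℕ} (v : Fin k → Fin m → ℤ) (w : Fin m → ℤ) (c : Fin k → ℕ) : Fin m → ℤ :=
  fun j => w j + ∑ i, (c i : ℤ) * v i j

lemma ehrA_T {k m : ℕ} (v : Fin k → Fin m → ℤ) (w : (Fin m → ℤ) × ℕ) (t : Fin k → ℝ)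
    (ht : ehrA v t = ((fun j => (w.1 j : ℝ)), (w.2 : ℝ))) (c : Fin k → ℕ) :
    ehrA v (fun i => t i + c i) =
      ((fun j => (ehrT v w.1 c j : ℝ)), ((∑ i, c i + w.2 : ℕ) : ℝ)) := by
  rw [ehrA_apply, Prod.mk.injEq] at ht ⊢
  refine ⟨?_, ?_⟩
  · funext j
    have := congrFun ht.1 j
    simp only [ehrT, add_mul, Finset.sum_add_distrib]
    push_cast
    rw [this]
  · rw [Finset.sum_add_distrib, ht.2]
    push_cast
    ring

lemma ehr_eval_bind {κ ι : Type*} (f : MvPolynomial κ ℝ) (g : κ → MvPolynomial ι ℝ) (x : ι → ℝ) :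
    MvPolynomial.eval x (MvPolynomial.bind₁ g f) =
      MvPolynomial.eval (fun j => MvPolynomial.eval x (g j)) f := by
  have := MvPolynomial.aeval_bind₁ x g f
  simpa [MvPolynomial.coe_aeval_eq_eval] using this

lemma ehr_open_simplex {k m p : ℕ} (v : Fin k → Fin m → ℤ) (σ : Finset (Fin k))
    (hσ : σ.Nonempty) (r : ℕ) (hr : σ.card = r + 1)
    (hinj : ∀ x y : Fin k → ℝ, (∀ i ∉ σ, x i = 0) → (∀ i ∉ σ, y i = 0) →
      ehrA v x = ehrA v y → x = y)
    (f : MvPolynomial (Fin m) ℝ) (hf : f.totalDegree ≤ p) :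
    ∃ q : Polynomial ℝ, q.natDegree ≤ r + p ∧ ∀ n : ℕ, 0 < n →
      (ehrO v σ n).Finite ∧
      ∑ᶠ z ∈ ehrO v σ n, MvPolynomial.eval (fun j => (z j : ℝ)) f = q.eval (n : ℝ) := by
  classical
  have hw : ∀ w : (Fin m → ℤ) × ℕ, w.2 ≤ σ.card → ∃ q : Polynomial ℝ, q.natDegree ≤ r + p ∧
      ∀ n : ℕ, 0 < n → ∑ c ∈ (if w.2 ≤ n then σ.piAntidiag (n - w.2) else ∅),
        MvPolynomial.eval (fun j => (ehrT v w.1 c j : ℝ)) f = q.eval (n : ℝ) := by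
    intro w hwc
    let g : Fin m → MvPolynomial (Fin k) ℝ := fun j =>
      MvPolynomial.C (w.1 j : ℝ) + ∑ i, MvPolynomial.C (v i j : ℝ) * MvPolynomial.X i
    have hg : ∀ j, (g j).totalDegree ≤ 1 := by
      intro j
      refine (MvPolynomial.totalDegree_add _ _).trans (max_le (by rw [MvPolynomial.totalDegree_C]; omega) ?_)
      refine MvPolynomial.totalDegree_finsetSum_le fun i _ => ?_
      refine (MvPolynomial.totalDegree_mul _ _).trans ?_
      rw [MvPolynomial.totalDegree_C, MvPolynomial.totalDegree_X]
    obtain ⟨q, hq1, hq2, hq3⟩ := ehr_simplex_poly (MvPolynomial.bind₁ g f) p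
      ((ehr_totalDegree_subst f g hg).trans hf) σ hσ r hr
    refine ⟨q.comp (Polynomial.X + Polynomial.C ((r : ℝ) - w.2)), ?_, ?_⟩
    · rw [Polynomial.natDegree_comp, Polynomial.natDegree_X_add_C, mul_one]
      exact hq1
    · intro n hn
      have hN : (n : ℝ) + ((r : ℝ) - w.2) = ((n + r - w.2 : ℕ) : ℝ) := by
        rw [Nat.cast_sub (by omega)]; push_cast; ring
      simp only [Polynomial.eval_comp, Polynomial.eval_add, Polynomial.eval_X, Polynomial.eval_C]
      rw [hN]
      split_ifs with hle
      · rw [show n + r - w.2 = (n - w.2) + r by omega, hq3]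
        refine Finset.sum_congr rfl fun c _ => ?_
        rw [ehr_eval_bind]
        congr 2
        funext j
        simp only [g, ehrT, map_add, map_sum, map_mul, MvPolynomial.eval_C, MvPolynomial.eval_X]
        push_cast
        congr 1
        exact Finset.sum_congr rfl fun i _ => mul_comm _ _
      · rw [hq2 _ (by omega), Finset.sum_empty]
  have huniq : ∀ w w' : (Fin m → ℤ) × ℕ, w ∈ ehrB v σ → w' ∈ ehrB v σ → ∀ c c' : Fin k → ℕ,
      (∀ i ∉ σ, c i = 0) → (∀ i ∉ σ, c' i = 0) → ∑ i, c i + w.2 = ∑ i, c' i + w'.2 →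
      ehrT v w.1 c = ehrT v w'.1 c' → w = w' ∧ c = c' := by
    rintro w w' ⟨t, h1, h2, h3⟩ ⟨t', h1', h2', h3'⟩ c c' hc hc' hs hT
    have hx := hinj (fun i => t i + c i) (fun i => t' i + c' i)
      (fun i hi => by simp [h2 i hi, hc i hi]) (fun i hi => by simp [h2' i hi, hc' i hi])
      (by rw [ehrA_T v w t h3, ehrA_T v w' t' h3', hs, hT])
    have hcc : c = c' := by
      funext i
      by_cases hi : i ∈ σ
      · have := congrFun hx i
        obtain ⟨ha, hb⟩ := h1 i hi
        obtain ⟨ha', hb'⟩ := h1' i hi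
        have e1 : (c i : ℝ) < c' i + 1 := by linarith
        have e2 : (c' i : ℝ) < c i + 1 := by linarith
        have e1 : c i < c' i + 1 := by exact_mod_cast e1
        have e2 : c' i < c i + 1 := by exact_mod_cast e2
        omega
      · rw [hc i hi, hc' i hi]
    subst hcc
    refine ⟨?_, rfl⟩
    have htt : t = t' := by
      funext i
      have := congrFun hx i
      simpa using this
    subst htt
    rw [h3, Prod.mk.injEq] at h3'
    refine Prod.ext (funext fun j => ?_) (by exact_mod_cast h3'.2)
    have := congrFun h3'.1 j
    exact_mod_cast this
  choose! q hq1 hq2 using hw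
  refine ⟨∑ w ∈ (ehrB_finite v σ).toFinset, q w, ?_, ?_⟩
  · refine Polynomial.natDegree_sum_le_of_forall_le _ _ fun w hw => ?_
    exact hq1 w (ehrB_le v σ ((ehrB_finite v σ).mem_toFinset.1 hw))
  intro n hn
  let C : (Fin m → ℤ) × ℕ → Finset (Fin k → ℕ) :=
    fun w => if w.2 ≤ n then σ.piAntidiag (n - w.2) else ∅
  have hC : ∀ w c, c ∈ C w ↔ (∀ i ∉ σ, c i = 0) ∧ ∑ i, c i + w.2 = n := by
    intro w c
    have hsum : (∀ i ∉ σ, c i = 0) → ∑ i, c i = σ.sum c := fun h =>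
      (Finset.sum_subset (Finset.subset_univ σ) fun i _ hi => h i hi).symm
    simp only [C]
    split_ifs with hle
    · rw [Finset.mem_piAntidiag]
      constructor
      · rintro ⟨h1, h2⟩
        have h3 : ∀ i ∉ σ, c i = 0 := fun i hi => by_contra fun h => hi (h2 i h)
        refine ⟨h3, ?_⟩
        rw [hsum h3]; omega
      · rintro ⟨h1, h2⟩
        rw [hsum h1] at h2
        exact ⟨by omega, fun i hi => by_contra fun h => hi (h1 i h)⟩
    · simp only [Finset.notMem_empty, false_iff, not_and]
      intro _; omega
  have hO : ehrO v σ n = ⋃ w ∈ ehrB v σ, ehrT v w.1 '' (C w : Set (Fin k → ℕ)) := by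
    ext z
    simp only [Set.mem_iUnion, Set.mem_image, Finset.mem_coe, exists_prop]
    constructor
    · rintro ⟨a, h1, h2, h3⟩
      let c : Fin k → ℕ := fun i => ⌈a i⌉₊ - 1
      let t : Fin k → ℝ := fun i => a i - c i
      have hc0 : ∀ i ∉ σ, c i = 0 := fun i hi => by simp [c, h2 i hi]
      have hcl : ∀ i ∈ σ, (c i : ℝ) < a i ∧ a i ≤ c i + 1 := by
        intro i hi
        have hpos := Nat.ceil_pos.2 (h1 i hi)
        have e : (c i : ℝ) + 1 = ⌈a i⌉₊ := by
          have : c i + 1 = ⌈a i⌉₊ := by simp only [c]; omega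
          exact_mod_cast this
        have e1 := Nat.le_ceil (a i)
        have e2 := Nat.ceil_lt_add_one (h1 i hi).le
        constructor <;> linarith
      rw [ehrA_apply, Prod.mk.injEq] at h3
      have hle : ∑ i, c i ≤ n := by
        have : ((∑ i, c i : ℕ) : ℝ) ≤ n := by
          rw [← h3.2]
          push_cast
          refine Finset.sum_le_sum fun i _ => ?_
          by_cases hi : i ∈ σ
          · exact (hcl i hi).1.le
          · simp [hc0 i hi, h2 i hi]
        exact_mod_cast this
      refine ⟨(fun j => z j - ∑ i, (c i : ℤ) * v i j, n - ∑ i, c i), ⟨t, ?_, ?_, ?_⟩, c, ?_, ?_⟩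
      · intro i hi
        have := hcl i hi
        simp only [t]
        constructor <;> linarith
      · intro i hi
        simp [t, hc0 i hi, h2 i hi]
      · rw [ehrA_apply, Prod.mk.injEq]
        constructor
        · funext j
          have := congrFun h3.1 j
          simp only [t, sub_mul, Finset.sum_sub_distrib]
          push_cast
          rw [this]
        · rw [Nat.cast_sub hle]
          simp only [t, Finset.sum_sub_distrib]
          rw [h3.2]
          push_cast
          rfl
      · rw [hC]
        exact ⟨hc0, by simp only; omega⟩
      · funext j
        simp [ehrT]
    · rintro ⟨w, ⟨t, h1, h2, h3⟩, c, hc, rfl⟩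
      rw [hC] at hc
      refine ⟨fun i => t i + c i, ?_, ?_, ?_⟩
      · intro i hi
        have := (h1 i hi).1
        positivity
      · intro i hi
        simp [h2 i hi, hc.1 i hi]
      · rw [ehrA_T v w t h3, hc.2]
  have hfinT : ∀ w ∈ ehrB v σ, (ehrT v w.1 '' (C w : Set (Fin k → ℕ))).Finite :=
    fun w _ => (C w).finite_toSet.image _
  refine ⟨?_, ?_⟩
  · rw [hO]
    exact (ehrB_finite v σ).biUnion hfinT
  · rw [hO, finsum_mem_biUnion ?_ (ehrB_finite v σ) hfinT, Polynomial.eval_finsetSum,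
      finsum_mem_eq_finite_toFinset_sum _ (ehrB_finite v σ)]
    · refine Finset.sum_congr rfl fun w hw => ?_
      have hw := (ehrB_finite v σ).mem_toFinset.1 hw
      rw [finsum_mem_image, finsum_mem_coe_finset, ← hq2 w (ehrB_le v σ hw) n hn]
      intro c hc c' hc' he
      rw [Finset.mem_coe, hC] at hc hc'
      exact (huniq w w hw hw c c' hc.1 hc'.1 (by omega) he).2
    · intro w hw w' hw' hne
      rw [Function.onFun, Set.disjoint_left]
      rintro z ⟨c, hc, rfl⟩ ⟨c', hc', he⟩
      rw [Finset.mem_coe, hC] at hc hc'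
      exact hne (huniq w w' hw hw' c c' hc.1 hc'.1 (by omega) he.symm).1

lemma ehr_mem_dilate {k m : ℕ} (v : Fin k → Fin m → ℤ) (n : ℕ) (hn : 0 < n) (z : Fin m → ℤ) :
    (fun j => (z j : ℝ)) ∈ (n : ℝ) • convexHull ℝ (Set.range fun i => fun j => (v i j : ℝ)) ↔
      ∃ a : Fin k → ℝ, (∀ i, 0 ≤ a i) ∧ ehrA v a = ((fun j => (z j : ℝ)), (n : ℝ)) := by
  have hn' : (0 : ℝ) < n := by exact_mod_cast hn
  let Λ : (Fin k → ℝ) →ₗ[ℝ] (Fin m → ℝ) :=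
    Fintype.linearCombination ℝ (fun i => fun j => (v i j : ℝ))
  have hΛ : ∀ a, Λ a = fun j => ∑ i, a i * (v i j : ℝ) := by
    intro a
    funext j
    simp [Λ, Fintype.linearCombination_apply]
  have hull : convexHull ℝ (Set.range fun i => fun j => (v i j : ℝ)) =
      Λ '' stdSimplex ℝ (Fin k) := by
    rw [← convexHull_basis_eq_stdSimplex, Λ.image_convexHull, ← Set.range_comp]
    congr 2
    funext i j
    simp [hΛ]
  rw [hull, Set.mem_smul_set]
  constructor
  · rintro ⟨_, ⟨a, ha, rfl⟩, h⟩
    refine ⟨(n : ℝ) • a, fun i => mul_nonneg hn'.le (ha.1 i), ?_⟩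
    rw [ehrA_apply, ← hΛ, map_smul, h]
    simp [← Finset.mul_sum, ha.2]
  · rintro ⟨a, ha, h⟩
    rw [ehrA_apply, ← hΛ, Prod.mk.injEq] at h
    refine ⟨_, ⟨(n : ℝ)⁻¹ • a, ⟨fun i => mul_nonneg (by positivity) (ha i), ?_⟩, rfl⟩, ?_⟩
    · simp [← Finset.mul_sum, h.2, hn'.ne']
    · rw [map_smul, smul_inv_smul₀ hn'.ne', h.1]

lemma ehr_card_le {k m : ℕ} (v : Fin k → Fin m → ℤ) (σ : Finset (Fin k))
    (hinj : ∀ x y : Fin k → ℝ, (∀ i ∉ σ, x i = 0) → (∀ i ∉ σ, y i = 0) →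
      ehrA v x = ehrA v y → x = y) :
    σ.card ≤ Module.finrank ℝ (affineSpan ℝ (convexHull ℝ
      (Set.range fun i => fun j => (v i j : ℝ)))).direction + 1 := by
  classical
  let V : σ → Fin m → ℝ := fun i j => (v i j : ℝ)
  have hind : AffineIndependent ℝ V := by
    rw [affineIndependent_iff_of_fintype]
    intro w hw hs i
    rw [Finset.weightedVSub_eq_linear_combination _ hw] at hs
    let x : Fin k → ℝ := fun i => if h : i ∈ σ then w ⟨i, h⟩ else 0
    have hsum : ∀ g : Fin k → ℝ, ∑ i, x i * g i = ∑ i : σ, w i * g i := by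
      intro g
      rw [← Finset.sum_subset (Finset.subset_univ σ) fun i _ hi => by simp [x, hi],
        ← Finset.sum_coe_sort σ]
      refine Finset.sum_congr rfl fun i _ => ?_
      simp [x]
    have hx := hinj x 0 (fun i hi => by simp [x, hi]) (fun i hi => rfl) (by
      rw [ehrA_apply, map_zero]
      refine Prod.ext ?_ ?_
      · funext j
        have := congrFun hs j
        simp only [hsum]
        simpa [V] using this
      · have := hsum fun _ => 1
        simp only [mul_one] at this
        rw [hw] at this
        exact this)
    have := congrFun hx i
    simpa [x] using this
  have h1 := hind.card_le_finrank_succ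
  rw [Fintype.card_coe] at h1
  refine h1.trans (Nat.add_le_add_right ?_ 1)
  rw [affineSpan_convexHull, direction_affineSpan]
  refine Submodule.finrank_mono (vectorSpan_mono ℝ ?_)
  rintro _ ⟨i, rfl⟩
  exact ⟨i, rfl⟩

open Classical in
lemma ehr_main {k m p : ℕ} (v : Fin k → Fin m → ℤ) (f : MvPolynomial (Fin m) ℝ)
    (hf : f.totalDegree ≤ p) :
    ∃ q : Polynomial ℝ,
      q.natDegree ≤ Module.finrank ℝ (affineSpan ℝ (convexHull ℝ
        (Set.range fun i => fun j => (v i j : ℝ)))).direction + p ∧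
      ∀ n : ℕ, 0 < n →
        ∑ᶠ z ∈ {z : Fin m → ℤ | (fun j => (z j : ℝ)) ∈ (n : ℝ) • convexHull ℝ
          (Set.range fun i => fun j => (v i j : ℝ))}, MvPolynomial.eval (fun j => (z j : ℝ)) f =
          q.eval (n : ℝ) := by
  let Δ : Finset (Finset (Fin k)) := Finset.univ.filter fun σ =>
    σ.Nonempty ∧ EhrCan (ehrA v) (fun i => if i ∈ σ then 1 else 0)
  have hΔ : ∀ σ ∈ Δ, ∃ q : Polynomial ℝ,
      q.natDegree ≤ Module.finrank ℝ (affineSpan ℝ (convexHull ℝ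
        (Set.range fun i => fun j => (v i j : ℝ)))).direction + p ∧ ∀ n : ℕ, 0 < n →
      (ehrO v σ n).Finite ∧
      ∑ᶠ z ∈ ehrO v σ n, MvPolynomial.eval (fun j => (z j : ℝ)) f = q.eval (n : ℝ) := by
    intro σ hσ
    obtain ⟨hne, hcan⟩ := (Finset.mem_filter.1 hσ).2
    have hinj : ∀ x y : Fin k → ℝ, (∀ i ∉ σ, x i = 0) → (∀ i ∉ σ, y i = 0) →
        ehrA v x = ehrA v y → x = y := fun x y hx hy h =>
      hcan.inj _ (fun i hi => hx i (by simpa using hi)) (fun i hi => hy i (by simpa using hi)) h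
    have hr : σ.card = (σ.card - 1) + 1 := by have := hne.card_pos; omega
    obtain ⟨q, h1, h2⟩ := ehr_open_simplex v σ hne (σ.card - 1) hr hinj f hf
    have := ehr_card_le v σ hinj
    exact ⟨q, by omega, h2⟩
  choose! q hq1 hq2 using hΔ
  refine ⟨∑ σ ∈ Δ, q σ, Polynomial.natDegree_sum_le_of_forall_le _ _ fun σ hσ => hq1 σ hσ, ?_⟩
  intro n hn
  have hcanO : ∀ σ ∈ Δ, ∀ a : Fin k → ℝ, (∀ i ∈ σ, 0 < a i) → (∀ i ∉ σ, a i = 0) →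
      EhrCan (ehrA v) a := by
    intro σ hσ a h1 h2
    refine (Finset.mem_filter.1 hσ).2.2.of_support _ (fun i => ?_) fun i hi => ?_
    · by_cases hi : i ∈ σ
      · exact (h1 i hi).le
      · exact (h2 i hi).ge
    · exact h2 i (by simpa using hi)
  have hU : {z : Fin m → ℤ | (fun j => (z j : ℝ)) ∈ (n : ℝ) • convexHull ℝ
      (Set.range fun i => fun j => (v i j : ℝ))} = ⋃ σ ∈ (Δ : Set (Finset (Fin k))),
        ehrO v σ n := by
    ext z
    rw [Set.mem_ofPred_eq, ehr_mem_dilate v n hn]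
    simp only [Set.mem_iUnion, Finset.mem_coe, exists_prop]
    constructor
    · rintro ⟨a, ha, hA⟩
      obtain ⟨b, hb, hbA⟩ := ehrCan_exists v a ha
      rw [hA] at hbA
      refine ⟨Finset.univ.filter fun i => b i ≠ 0, ?_, b, ?_, ?_, hbA⟩
      · refine Finset.mem_filter.2 ⟨Finset.mem_univ _, ?_, ?_⟩
        · by_contra hne
          rw [Finset.not_nonempty_iff_eq_empty, Finset.filter_eq_empty_iff] at hne
          have h0 : b = 0 := by
            funext i
            simpa using hne (Finset.mem_univ i)
          rw [h0, map_zero] at hbA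
          have := congrArg Prod.snd hbA
          simp only [Prod.snd_zero] at this
          have : n = 0 := by exact_mod_cast this.symm
          omega
        · refine hb.of_support _ (fun i => by split_ifs <;> norm_num) fun i hi => by simp [hi]
      · intro i hi
        exact lt_of_le_of_ne (hb.1 i) (Ne.symm (Finset.mem_filter.1 hi).2)
      · intro i hi
        simpa using hi
    · rintro ⟨σ, hσ, a, h1, h2, h3⟩
      exact ⟨a, (hcanO σ hσ a h1 h2).1, h3⟩
  rw [hU, finsum_mem_biUnion ?_ Δ.finite_toSet (fun σ hσ => (hq2 σ hσ n hn).1),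
    finsum_mem_coe_finset, Polynomial.eval_finsetSum]
  · exact Finset.sum_congr rfl fun σ hσ => (hq2 σ hσ n hn).2
  · intro σ hσ τ hτ hne
    rw [Function.onFun, Set.disjoint_left]
    rintro z ⟨a, h1, h2, h3⟩ ⟨b, h1', h2', h3'⟩
    have hab := (hcanO σ hσ a h1 h2).unique _ (hcanO τ hτ b h1' h2') (h3.trans h3'.symm)
    subst hab
    refine hne (Finset.ext fun i => ⟨fun hi => ?_, fun hi => ?_⟩)
    · by_contra h
      exact (h1 i hi).ne' (h2' i h)
    · by_contra h
      exact (h1' i hi).ne' (h2 i h)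


/-- Weighted Ehrhart polynomiality: for a lattice polytope P ⊆ ℝ^m (convex hull of
finitely many integer points) and a polynomial f of total degree ≤ p, the weighted
lattice-point count L_{P,f}(n) = ∑_{z ∈ nP ∩ ℤ^m} f(z) agrees, for all positive
integers n, with a polynomial in n of degree at most dim P + p. -/
theorem stmt13 (m p : ℕ) (P : Set (Fin m → ℝ)) (s : Finset (Fin m → ℤ))
    (hP : P = convexHull ℝ ((fun z : Fin m → ℤ => fun i => (z i : ℝ)) '' ↑s))
    (f : MvPolynomial (Fin m) ℝ) (hf : f.totalDegree ≤ p) :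
    ∃ q : Polynomial ℝ,
      q.natDegree ≤ Module.finrank ℝ (affineSpan ℝ P).direction + p ∧
      ∀ n : ℕ, 0 < n →
        (∑ᶠ z : Fin m → ℤ,
            Set.indicator ((n : ℝ) • P) (fun x => MvPolynomial.eval x f)
              (fun i => (z i : ℝ))) =
          q.eval (n : ℝ) := by

  let v : Fin s.card → Fin m → ℤ := fun i => (s.equivFin.symm i : Fin m → ℤ)
  have hrange : (fun z : Fin m → ℤ => fun i => (z i : ℝ)) '' ↑s =
      Set.range fun i => fun j => (v i j : ℝ) := by
    ext x
    constructor
    · rintro ⟨z, hz, rfl⟩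
      exact ⟨s.equivFin ⟨z, hz⟩, by simp [v]⟩
    · rintro ⟨i, rfl⟩
      exact ⟨v i, (s.equivFin.symm i).2, rfl⟩
  rw [hrange] at hP
  subst hP
  obtain ⟨q, h1, h2⟩ := ehr_main v f hf
  refine ⟨q, h1, fun n hn => ?_⟩
  rw [← h2 n hn, finsum_mem_def]
  refine finsum_congr fun z => ?_
  by_cases hz : (fun j => (z j : ℝ)) ∈ (n : ℝ) • convexHull ℝ
      (Set.range fun i => fun j => (v i j : ℝ))
  · rw [Set.indicator_of_mem hz, Set.indicator_of_mem (by exact hz)]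
  · rw [Set.indicator_of_notMem hz, Set.indicator_of_notMem (by exact hz)]
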